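/- There exists a 6-point metric space (X, d) that satisfies all ANN(n) inequalities for every positive integer n, but does not admit an isometric embedding into any CAT(0) space. -/

import Mathlib

/-- Squared-distance sum identity: the barycentre identity. -/
theorem bary_identity {E : Type*} [NormedAddCommGroup E] [InnerProductSpace ℝ E] {n : ℕ}
    (y : Fin n → E) (p : Fin n → ℝ) (hp : ∑ i, p i = 1) (w : E) :
    ∑ i, p i * ‖y i - w‖ ^ 2 =
      ‖w - ∑ i, p i • y i‖ ^ 2 + ∑ i, p i * ‖y i - ∑ k, p k • y k‖ ^ 2 := by
  set z := ∑ i, p i • y i with hz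
  have h1 : ∀ i, p i * ‖y i - w‖ ^ 2 =
      p i * ‖y i - z‖ ^ 2 + 2 * inner ℝ (p i • y i - p i • z) (z - w) + p i * ‖w - z‖ ^ 2 := by
    intro i
    have : y i - w = (y i - z) + (z - w) := by abel
    rw [this, norm_add_sq_real, ← smul_sub, real_inner_smul_left, norm_sub_rev w z]
    ring
  simp_rw [h1]
  rw [Finset.sum_add_distrib, Finset.sum_add_distrib, ← Finset.mul_sum, ← sum_inner,
    Finset.sum_sub_distrib, ← Finset.sum_smul, ← Finset.sum_mul, hp, ← hz]
  simp
  ring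

theorem ann_pair (a b s t d : ℝ) (ha : 0 ≤ a) (hb : 0 ≤ b) (hd : 0 ≤ d) (h : d ≤ s + t) :
    (if 0 < a + b then a * b / (a + b) * d ^ 2 else 0) ≤ a * s ^ 2 + b * t ^ 2 := by
  split_ifs with hab
  · have h1 : d ^ 2 ≤ (s + t) ^ 2 := by gcongr
    have h2 : a * b / (a + b) * d ^ 2 ≤ a * b / (a + b) * (s + t) ^ 2 := by gcongr
    refine h2.trans ?_
    rw [div_mul_eq_mul_div, div_le_iff₀ hab]
    nlinarith [sq_nonneg (a * s - b * t)]
  · positivity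

/-- If a Euclidean comparison map is distance non-increasing and the barycentre of `p` is
metrically far enough, then the ANN inequality holds for these weights. -/
theorem ann_of_map {E : Type*} [NormedAddCommGroup E] [InnerProductSpace ℝ E] {n : ℕ}
    (y : Fin n → E) (D : Fin n → Fin n → ℝ) (p q : Fin n → ℝ) (pi : Fin n → Fin n → ℝ)
    (hp : ∀ i, 0 ≤ p i) (hq : ∀ j, 0 ≤ q j) (hpi : ∀ i j, 0 ≤ pi i j)
    (sp : ∑ i, p i = 1) (sq : ∑ j, q j = 1) (hs : ∀ i, ∑ j, pi i j = p i + q i)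
    (h1 : ∀ i j, ‖y i - y j‖ ≤ D i j)
    (h2 : ∀ i j, D i j ≤ ‖y i - ∑ k, p k • y k‖ + ‖y j - ∑ k, p k • y k‖) :
    (1 / 2) * ∑ i, ∑ j,
            (if 0 < pi i j + pi j i then
              pi i j * pi j i / (pi i j + pi j i) * D i j ^ 2 else 0)
          ≤ ∑ i, ∑ j, p i * q j * D i j ^ 2 := by
  set g : Fin n → ℝ := fun i => ‖y i - ∑ k, p k • y k‖ with hg
  have hD : ∀ i j, 0 ≤ D i j := fun i j => (norm_nonneg _).trans (h1 i j)
  have e1 : ∑ i, ∑ j, p i * q j * ‖y i - y j‖ ^ 2 ≤ ∑ i, ∑ j, p i * q j * D i j ^ 2 := by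
    refine Finset.sum_le_sum fun i _ => Finset.sum_le_sum fun j _ => ?_
    have := h1 i j
    have := hp i
    have := hq j
    gcongr
  have e2 : ∑ i, ∑ j, p i * q j * ‖y i - y j‖ ^ 2 = ∑ i, (p i + q i) * g i ^ 2 := by
    rw [Finset.sum_comm]
    have : ∀ j, ∑ i, p i * q j * ‖y i - y j‖ ^ 2 =
        q j * g j ^ 2 + q j * ∑ i, p i * g i ^ 2 := by
      intro j
      rw [← mul_add, ← bary_identity y p sp (y j), Finset.mul_sum]
      exact Finset.sum_congr rfl fun i _ => by ring
    simp_rw [this]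
    rw [Finset.sum_add_distrib, ← Finset.sum_mul, sq, one_mul, ← Finset.sum_add_distrib]
    exact Finset.sum_congr rfl fun i _ => by ring
  have e3 : ∑ i, ∑ j, (pi i j * g i ^ 2 + pi j i * g j ^ 2) =
      2 * ∑ i, (p i + q i) * g i ^ 2 := by
    simp_rw [Finset.sum_add_distrib]
    rw [Finset.sum_comm (f := fun i j => pi j i * g j ^ 2)]
    simp_rw [← Finset.sum_mul, hs]
    ring
  have e4 : ∑ i, ∑ j, (if 0 < pi i j + pi j i then
              pi i j * pi j i / (pi i j + pi j i) * D i j ^ 2 else 0) ≤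
      ∑ i, ∑ j, (pi i j * g i ^ 2 + pi j i * g j ^ 2) :=
    Finset.sum_le_sum fun i _ => Finset.sum_le_sum fun j _ =>
      ann_pair _ _ _ _ _ (hpi i j) (hpi j i) (hD i j) (h2 i j)
  linarith

/-- Reflection (ellipse) estimate. -/
theorem ellipse_bound (α β x m M R : ℝ) (hα : 0 ≤ α) (hβ : 0 ≤ β) (hM : 0 < M) (hR : 0 ≤ R)
    (h : m ^ 2 + R = M ^ 2) (h1 : (x - m) ^ 2 + R ≤ α ^ 2) (h2 : (x + m) ^ 2 + R ≤ β ^ 2) :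
    2 * M ≤ α + β := by
  have key : ∀ γ v : ℝ, 0 ≤ γ → v ^ 2 + R ≤ γ ^ 2 → v * m + R ≤ M * γ := by
    intro γ v hγ hv
    refine abs_le_of_sq_le_sq' ?_ (by positivity) |>.2
    have : (M * γ) ^ 2 = (m ^ 2 + R) * γ ^ 2 := by rw [h]; ring
    rw [this]
    have h3 : (m ^ 2 + R) * (v ^ 2 + R) ≤ (m ^ 2 + R) * γ ^ 2 := by
      have : 0 ≤ m ^ 2 + R := by positivity
      gcongr
    nlinarith [mul_nonneg hR (sq_nonneg (v - m))]
  have k1 := key α (m - x) hα (by nlinarith)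
  have k2 := key β (x + m) hβ h2
  have : M * (2 * M) ≤ M * (α + β) := by nlinarith
  exact le_of_mul_le_mul_left this hM

/-- A point metrically between two points satisfies the comparison inequality. -/
theorem between_ineq {Y : Type*} [MetricSpace Y]
    (hY : ∀ a b : Y, ∀ t ∈ Set.Icc (0 : ℝ) 1, ∃ z : Y, ∀ w : Y,
            dist w z ^ 2 ≤ (1 - t) * dist w a ^ 2 + t * dist w b ^ 2
              - t * (1 - t) * dist a b ^ 2)
    (a b x : Y) (α β : ℝ) (hα : 0 < α) (hβ : 0 < β) (h1 : dist x a ≤ α) (h2 : dist x b ≤ β)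
    (h3 : α + β ≤ dist a b) (w : Y) :
    (α + β) * dist w x ^ 2 ≤ β * dist w a ^ 2 + α * dist w b ^ 2 - α * β * (α + β) := by
  have hs : 0 < α + β := by positivity
  have hab : dist a b = α + β :=
    le_antisymm ((dist_triangle_left a b x).trans (by linarith)) h3
  obtain ⟨z, hz⟩ := hY a b (α / (α + β)) ⟨by positivity, by rw [div_le_one hs]; linarith⟩
  have conv : ∀ v, (α + β) * dist v z ^ 2 ≤
      β * dist v a ^ 2 + α * dist v b ^ 2 - α * β * (α + β) := by
    intro v
    have := hz v
    rw [hab] at this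
    have h5 := mul_le_mul_of_nonneg_left this hs.le
    refine h5.trans (le_of_eq ?_)
    field_simp
    ring
  have hx := conv x
  have q1 : dist x a ^ 2 ≤ α ^ 2 := by gcongr
  have q2 : dist x b ^ 2 ≤ β ^ 2 := by gcongr
  have h0 : (α + β) * dist x z ^ 2 ≤ 0 := by
    nlinarith [mul_le_mul_of_nonneg_left q1 hβ.le, mul_le_mul_of_nonneg_left q2 hα.le]
  have h6 : dist x z ^ 2 ≤ 0 := by
    by_contra hh
    push Not at hh
    have := mul_pos hs hh
    linarith
  have h7 : dist x z = 0 := by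
    have := sq_nonneg (dist x z)
    exact pow_eq_zero_iff (two_ne_zero) |>.1 (le_antisymm h6 this)
  rw [dist_eq_zero.1 h7]
  exact conv w

theorem not_cat {Y : Type*} [MetricSpace Y]
    (hY : ∀ a b : Y, ∀ t ∈ Set.Icc (0 : ℝ) 1, ∃ z : Y, ∀ w : Y,
            dist w z ^ 2 ≤ (1 - t) * dist w a ^ 2 + t * dist w b ^ 2
              - t * (1 - t) * dist a b ^ 2)
    (a a' b b' c c' : Y)
    (haa : dist a a' = 730) (hbb : dist b b' = 730) (hcc : dist c c' = 120)
    (hab : dist a b ^ 2 = 266450) (hab' : dist a b' ^ 2 = 266450)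
    (ha'b : dist a' b ^ 2 = 266450) (ha'b' : dist a' b' ^ 2 = 266450)
    (hca : dist c a ^ 2 = 72197) (hcb : dist c b ^ 2 = 72197)
    (hca' : dist c a' ^ 2 = 279517)
    (hc'a : dist c' a ^ 2 = 72197) (hc'b : dist c' b ^ 2 = 72197)
    (hc'a' : dist c' a' ^ 2 = 279517) : False := by
  have le_of : ∀ (u v : Y) (r : ℝ), 0 ≤ r → dist u v ^ 2 ≤ r ^ 2 → dist u v ≤ r :=
    fun u v r hr h => abs_le_of_sq_le_sq' h hr |>.2
  have half : (1 / 2 : ℝ) ∈ Set.Icc (0 : ℝ) 1 := by constructor <;> norm_num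
  -- the common midpoint of the two diagonals
  obtain ⟨x, hx⟩ := hY a a' (1 / 2) half
  rw [haa] at hx
  have xa : dist x a ≤ 365 := by
    rw [dist_comm]; apply le_of _ _ _ (by norm_num)
    have := hx a
    rw [haa, dist_self] at this; linarith
  have xa' : dist x a' ≤ 365 := by
    rw [dist_comm]; apply le_of _ _ _ (by norm_num)
    have := hx a'
    rw [dist_comm a' a, haa, dist_self] at this; linarith
  have xb : dist x b ≤ 365 := by
    rw [dist_comm]; apply le_of _ _ _ (by norm_num)
    have := hx b
    rw [dist_comm b a, hab, dist_comm b a', ha'b] at this; linarith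
  have xb' : dist x b' ≤ 365 := by
    rw [dist_comm]; apply le_of _ _ _ (by norm_num)
    have := hx b'
    rw [dist_comm b' a, hab', dist_comm b' a', ha'b'] at this; linarith
  have exa : dist x a = 365 := by linarith [dist_triangle_left a a' x]
  have exb : dist x b = 365 := by linarith [dist_triangle_left b b' x]
  have sc : (284 / 365 : ℝ) ∈ Set.Icc (0 : ℝ) 1 := by constructor <;> norm_num
  obtain ⟨P, hP⟩ := hY x a (284 / 365) sc
  obtain ⟨Q, hQ⟩ := hY x b (284 / 365) sc
  rw [exa] at hP
  rw [exb] at hQ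
  have Px : dist x P ≤ 284 := by
    apply le_of _ _ _ (by norm_num)
    have := hP x
    rw [exa, dist_self] at this; linarith
  have Pa : dist a P ≤ 81 := by
    apply le_of _ _ _ (by norm_num)
    have := hP a
    rw [dist_comm a x, exa, dist_self] at this; linarith
  have Qx : dist x Q ≤ 284 := by
    apply le_of _ _ _ (by norm_num)
    have := hQ x
    rw [exb, dist_self] at this; linarith
  have Qb : dist b Q ≤ 81 := by
    apply le_of _ _ _ (by norm_num)
    have := hQ b
    rw [dist_comm b x, exb, dist_self] at this; linarith
  have Qx2 : 284 ≤ dist x Q := by linarith [dist_triangle_right x b Q]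
  have Qx3 : 284 ^ 2 ≤ dist x Q ^ 2 := by gcongr
  have Pa' : 284 + 365 ≤ dist P a' := by linarith [dist_triangle_left a a' P, dist_comm P a]
  have hxa2 : dist x a' ^ 2 ≤ 365 ^ 2 := by gcongr
  -- lower bound for `dist P Q`
  have Qa' := hQ a'
  have low := between_ineq hY P a' x 284 365 (by norm_num) (by norm_num) Px xa' Pa' Q
  rw [dist_comm Q x, dist_comm Q a', dist_comm Q P] at low
  rw [dist_comm a' x] at Qa'
  have PQ : 2 * 284 ^ 2 ≤ dist P Q ^ 2 := by nlinarith
  obtain ⟨o, ho⟩ := hY P Q (1 / 2) half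
  have co : dist c o ≤ 48 := by
    apply le_of _ _ _ (by norm_num)
    have h1 := ho c
    have h2 := hP c
    have h3 := hQ c
    have h4 := hx c
    linarith
  have c'o : dist c' o ≤ 48 := by
    apply le_of _ _ _ (by norm_num)
    have h1 := ho c'
    have h2 := hP c'
    have h3 := hQ c'
    have h4 := hx c'
    linarith
  linarith [dist_triangle_right c c' o]

/-- Coordinates of the base octahedron in three-space. -/
def oct0 : Fin 6 → Fin 3 → ℝ :=
  ![![365, 0, 0], ![-365, 0, 0], ![0, 365, 0], ![0, -365, 0], ![142, 142, 48], ![142, 142, -48]]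

/-- Coordinates of the deformed octahedron in four-space. -/
def oct1 : Fin 6 → Fin 4 → ℝ :=
  ![![355, 0, 0, 60], ![-355, 0, 0, 60], ![0, 355, 0, -60], ![0, -355, 0, -60],
    ![146, 146, 60, 0], ![146, 146, -60, 0]]

noncomputable def emb0 (v : Fin 6) : EuclideanSpace ℝ (Fin 3) := WithLp.toLp 2 (oct0 v)
noncomputable def emb1 (v : Fin 6) : EuclideanSpace ℝ (Fin 4) := WithLp.toLp 2 (oct1 v)

noncomputable def sq0 (v w : Fin 6) : ℝ := ∑ k, (oct0 v k - oct0 w k) ^ 2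
noncomputable def sq1 (v w : Fin 6) : ℝ := ∑ k, (oct1 v k - oct1 w k) ^ 2

theorem norm_emb0 (v w : Fin 6) : ‖emb0 v - emb0 w‖ = √(sq0 v w) := by
  rw [EuclideanSpace.norm_eq]; simp [emb0, sq0]
theorem norm_emb1 (v w : Fin 6) : ‖emb1 v - emb1 w‖ = √(sq1 v w) := by
  rw [EuclideanSpace.norm_eq]; simp [emb1, sq1]

/-- The six-point distance: the larger of the two Euclidean ones. -/
noncomputable def D6 (v w : Fin 6) : ℝ := max (dist (emb0 v) (emb0 w)) (dist (emb1 v) (emb1 w))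

theorem D6_eq (v w : Fin 6) : D6 v w = max (√(sq0 v w)) (√(sq1 v w)) := by
  rw [D6, dist_eq_norm, dist_eq_norm, norm_emb0, norm_emb1]

theorem sq_cmp0 (v w : Fin 6) :
    sq1 v w ≤ sq0 v w ∨ (v = 4 ∧ w = 5) ∨ (v = 5 ∧ w = 4) := by
  fin_cases v <;> fin_cases w <;>
    first
    | (right; simp; done)
    | (left; norm_num [sq0, sq1, oct0, oct1, Fin.sum_univ_succ])

theorem sq_cmp1 (v w : Fin 6) :
    sq0 v w ≤ sq1 v w ∨ (v = 0 ∧ w = 1) ∨ (v = 1 ∧ w = 0) ∨ (v = 2 ∧ w = 3) ∨ (v = 3 ∧ w = 2) := by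
  fin_cases v <;> fin_cases w <;>
    first
    | (right; simp; done)
    | (left; norm_num [sq0, sq1, oct0, oct1, Fin.sum_univ_succ])

theorem D6_sq (v w : Fin 6) : D6 v w ^ 2 = max (sq0 v w) (sq1 v w) := by
  have n0 : 0 ≤ sq0 v w := Finset.sum_nonneg fun _ _ => sq_nonneg _
  have n1 : 0 ≤ sq1 v w := Finset.sum_nonneg fun _ _ => sq_nonneg _
  rw [D6_eq]
  rcases le_total (sq0 v w) (sq1 v w) with h | h
  · rw [max_eq_right h, max_eq_right (Real.sqrt_le_sqrt h), Real.sq_sqrt n1]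
  · rw [max_eq_left h, max_eq_left (Real.sqrt_le_sqrt h), Real.sq_sqrt n0]

theorem D6_of_sq (v w : Fin 6) (r : ℝ) (hr : 0 ≤ r) (h : max (sq0 v w) (sq1 v w) = r ^ 2) :
    D6 v w = r := by
  have h0 : 0 ≤ D6 v w := by rw [D6_eq]; positivity
  rw [← D6_sq] at h
  exact (pow_left_inj₀ h0 hr two_ne_zero).1 h

theorem emb0_injective : Function.Injective emb0 := by
  intro v w h
  have h0 : oct0 v = oct0 w := by simpa [emb0] using h
  have a0 := congrFun h0 0
  have a1 := congrFun h0 1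
  have a2 := congrFun h0 2
  revert a0 a1 a2
  fin_cases v <;> fin_cases w <;> simp [oct0] <;> norm_num

theorem sq0_def (v w : Fin 6) : sq0 v w =
    (oct0 v 0 - oct0 w 0) ^ 2 + (oct0 v 1 - oct0 w 1) ^ 2 + (oct0 v 2 - oct0 w 2) ^ 2 := by
  rw [sq0, Fin.sum_univ_three]
theorem sq1_def (v w : Fin 6) : sq1 v w =
    (oct1 v 0 - oct1 w 0) ^ 2 + (oct1 v 1 - oct1 w 1) ^ 2 + (oct1 v 2 - oct1 w 2) ^ 2
      + (oct1 v 3 - oct1 w 3) ^ 2 := by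
  rw [sq1, Fin.sum_univ_four]

theorem D6_45 : D6 4 5 = 120 := D6_of_sq _ _ _ (by norm_num)
  (by simp [sq0_def, sq1_def, oct0, oct1]; norm_num)
theorem D6_01 : D6 0 1 = 730 := D6_of_sq _ _ _ (by norm_num)
  (by simp [sq0_def, sq1_def, oct0, oct1]; norm_num)
theorem D6_23 : D6 2 3 = 730 := D6_of_sq _ _ _ (by norm_num)
  (by simp [sq0_def, sq1_def, oct0, oct1]; norm_num)
theorem D6_comm (v w : Fin 6) : D6 v w = D6 w v := by
  rw [D6, D6, dist_comm, dist_comm (emb1 v)]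

set_option maxHeartbeats 1000000 in
theorem D6_ann (n : ℕ) (x : Fin n → Fin 6) (p q : Fin n → ℝ) (pi : Fin n → Fin n → ℝ)
    (hp : ∀ i, 0 ≤ p i) (hq : ∀ j, 0 ≤ q j) (hpi : ∀ i j, 0 ≤ pi i j)
    (sp : ∑ i, p i = 1) (sq : ∑ j, q j = 1) (hs : ∀ i, ∑ j, pi i j = p i + q i) :
    (1 / 2) * ∑ i, ∑ j,
            (if 0 < pi i j + pi j i then
              pi i j * pi j i / (pi i j + pi j i) * D6 (x i) (x j) ^ 2 else 0)
          ≤ ∑ i, ∑ j, p i * q j * D6 (x i) (x j) ^ 2 := by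
  have tri : ∀ {E : Type} [NormedAddCommGroup E] (u v z : E), ‖u - v‖ ≤ ‖u - z‖ + ‖v - z‖ := by
    intro E _ u v z
    have := dist_triangle_right u v z
    simpa [dist_eq_norm] using this
  set z0 := ∑ k, p k • emb0 (x k) with hz0
  set z1 := ∑ k, p k • emb1 (x k) with hz1
  have n0 : ∀ v, ‖emb0 v - z0‖ ^ 2 =
      (oct0 v 0 - z0 0) ^ 2 + (oct0 v 1 - z0 1) ^ 2 + (oct0 v 2 - z0 2) ^ 2 := by
    intro v
    rw [EuclideanSpace.norm_sq_eq, Fin.sum_univ_three]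
    simp [emb0]
  have n1 : ∀ v, ‖emb1 v - z1‖ ^ 2 =
      (oct1 v 0 - z1 0) ^ 2 + (oct1 v 1 - z1 1) ^ 2 + (oct1 v 2 - z1 2) ^ 2
        + (oct1 v 3 - z1 3) ^ 2 := by
    intro v
    rw [EuclideanSpace.norm_sq_eq, Fin.sum_univ_four]
    simp [emb1]
  by_cases hgood : 120 ≤ ‖emb0 4 - z0‖ + ‖emb0 5 - z0‖
  · refine ann_of_map (fun i => emb0 (x i)) (fun i j => D6 (x i) (x j)) p q pi hp hq hpi sp sq hs
      (fun i j => ?_) (fun i j => ?_)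
    · rw [← dist_eq_norm]; exact le_max_left _ _
    · have h0 := tri (emb0 (x i)) (emb0 (x j)) z0
      show D6 (x i) (x j) ≤ ‖emb0 (x i) - z0‖ + ‖emb0 (x j) - z0‖
      rcases sq_cmp0 (x i) (x j) with h | ⟨h, h'⟩ | ⟨h, h'⟩
      · rw [D6_eq, max_eq_left (Real.sqrt_le_sqrt h), ← norm_emb0]; exact h0
      · rw [h, h', D6_45]; exact hgood
      · rw [h, h', D6_comm, D6_45]; linarith
  · have c4 := n0 4
    have c5 := n0 5
    simp [oct0] at c4 c5
    have bad : ∀ k : ℝ, (k - 142) ^ 2 ≤ (142 - z0 0) ^ 2 + (142 - z0 1) ^ 2 → k ≤ 106 → False := by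
      intro k hk hk1
      have hR : (1296 : ℝ) ≤ (142 - z0 0) ^ 2 + (142 - z0 1) ^ 2 := by nlinarith
      have := ellipse_bound ‖emb0 4 - z0‖ ‖emb0 5 - z0‖ (z0 2) 48 60 1296 (norm_nonneg _)
        (norm_nonneg _) (by norm_num) (by norm_num) (by norm_num)
        (by nlinarith) (by nlinarith)
      apply hgood
      linarith
    have hX : 106 < z0 0 := by
      by_contra hh
      exact bad (z0 0) (by nlinarith [sq_nonneg (142 - z0 1)]) (not_lt.1 hh)
    have hY : 106 < z0 1 := by
      by_contra hh
      exact bad (z0 1) (by nlinarith [sq_nonneg (142 - z0 0)]) (not_lt.1 hh)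
    have cx : 71 / 73 * z0 0 ≤ z1 0 := by
      simp only [hz0, hz1, WithLp.ofLp_sum, Finset.sum_apply, WithLp.ofLp_smul, Pi.smul_apply,
        smul_eq_mul]
      rw [Finset.mul_sum]
      refine Finset.sum_le_sum fun i _ => ?_
      have : 71 / 73 * oct0 (x i) 0 ≤ oct1 (x i) 0 := by
        generalize x i = v
        fin_cases v <;> norm_num [oct0, oct1]
      have := mul_le_mul_of_nonneg_left this (hp i)
      simp only [emb0, emb1]
      linarith
    have cy : 71 / 73 * z0 1 ≤ z1 1 := by
      simp only [hz0, hz1, WithLp.ofLp_sum, Finset.sum_apply, WithLp.ofLp_smul, Pi.smul_apply,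
        smul_eq_mul]
      rw [Finset.mul_sum]
      refine Finset.sum_le_sum fun i _ => ?_
      have : 71 / 73 * oct0 (x i) 1 ≤ oct1 (x i) 1 := by
        generalize x i = v
        fin_cases v <;> norm_num [oct0, oct1]
      have := mul_le_mul_of_nonneg_left this (hp i)
      simp only [emb0, emb1]
      linarith
    have x2 : 7200 ≤ z1 0 ^ 2 := by nlinarith
    have y2 : 7200 ≤ z1 1 ^ 2 := by nlinarith
    have d0 := n1 0
    have d1 := n1 1
    have d2 := n1 2
    have d3 := n1 3
    simp [oct1] at d0 d1 d2 d3
    have g01 : 730 ≤ ‖emb1 0 - z1‖ + ‖emb1 1 - z1‖ := by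
      have := ellipse_bound ‖emb1 0 - z1‖ ‖emb1 1 - z1‖ (z1 0) 355 365 7200 (norm_nonneg _)
        (norm_nonneg _) (by norm_num) (by norm_num) (by norm_num)
        (by linarith [sq_nonneg (z1 2), sq_nonneg (60 - z1 3)])
        (by linarith [sq_nonneg (z1 2), sq_nonneg (60 - z1 3)])
      linarith
    have g23 : 730 ≤ ‖emb1 2 - z1‖ + ‖emb1 3 - z1‖ := by
      have := ellipse_bound ‖emb1 2 - z1‖ ‖emb1 3 - z1‖ (z1 1) 355 365 7200 (norm_nonneg _)
        (norm_nonneg _) (by norm_num) (by norm_num) (by norm_num)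
        (by linarith [sq_nonneg (z1 2), sq_nonneg (-60 - z1 3)])
        (by linarith [sq_nonneg (z1 2), sq_nonneg (-60 - z1 3)])
      linarith
    refine ann_of_map (fun i => emb1 (x i)) (fun i j => D6 (x i) (x j)) p q pi hp hq hpi sp sq hs
      (fun i j => ?_) (fun i j => ?_)
    · rw [← dist_eq_norm]; exact le_max_right _ _
    · have h0 := tri (emb1 (x i)) (emb1 (x j)) z1
      show D6 (x i) (x j) ≤ ‖emb1 (x i) - z1‖ + ‖emb1 (x j) - z1‖
      rcases sq_cmp1 (x i) (x j) with h | ⟨h, h'⟩ | ⟨h, h'⟩ | ⟨h, h'⟩ | ⟨h, h'⟩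
      · rw [D6_eq, max_eq_right (Real.sqrt_le_sqrt h), ← norm_emb1]; exact h0
      · rw [h, h', D6_01]; exact g01
      · rw [h, h', D6_comm, D6_01]; linarith
      · rw [h, h', D6_23]; exact g23
      · rw [h, h', D6_comm, D6_23]; linarith

theorem exists_six_point_ANN_not_CAT0 :
    ∃ (X : Type) (_ : MetricSpace X),
      Nat.card X = 6 ∧
      (∀ (n : ℕ) (x : Fin n → X) (p q : Fin n → ℝ) (pi : Fin n → Fin n → ℝ),
        (∀ i, 0 ≤ p i) → (∀ j, 0 ≤ q j) → (∀ i j, 0 ≤ pi i j) →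
        (∑ i, p i = 1) → (∑ j, q j = 1) →
        (∀ i, ∑ j, pi i j = p i + q i) →
        (1 / 2) * ∑ i, ∑ j,
            (if 0 < pi i j + pi j i then
              pi i j * pi j i / (pi i j + pi j i) * dist (x i) (x j) ^ 2 else 0)
          ≤ ∑ i, ∑ j, p i * q j * dist (x i) (x j) ^ 2) ∧
      ¬ ∃ (Y : Type) (_ : MetricSpace Y) (_ : CompleteSpace Y),
          (∀ a b : Y, ∀ t ∈ Set.Icc (0 : ℝ) 1, ∃ z : Y, ∀ w : Y,
            dist w z ^ 2 ≤ (1 - t) * dist w a ^ 2 + t * dist w b ^ 2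
              - t * (1 - t) * dist a b ^ 2) ∧
          ∃ f : X → Y, Isometry f := by
  let F : Fin 6 → EuclideanSpace ℝ (Fin 3) × EuclideanSpace ℝ (Fin 4) :=
    fun v => (emb0 v, emb1 v)
  have hF : Function.Injective F := fun v w h => emb0_injective (congrArg Prod.fst h)
  let M : MetricSpace (Fin 6) := MetricSpace.induced F hF inferInstance
  refine ⟨Fin 6, M, by simp, ?_, ?_⟩
  · intro n x p q pi hp hq hpi sp sq hs
    exact D6_ann n x p q pi hp hq hpi sp sq hs
  · rintro ⟨Y, _, _, hY, f, hf⟩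
    have hd : ∀ v w, dist (f v) (f w) = D6 v w := fun v w => hf.dist_eq v w
    refine not_cat hY (f 0) (f 1) (f 2) (f 3) (f 4) (f 5) ?_ ?_ ?_ ?_ ?_ ?_ ?_ ?_ ?_ ?_ ?_ ?_ ?_
    · rw [hd]; exact D6_01
    · rw [hd]; exact D6_23
    · rw [hd]; exact D6_45
    all_goals
      rw [hd, D6_sq]
      simp [sq0_def, sq1_def, oct0, oct1]
      norm_num
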